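/- arXiv:2008.08499 — 2 statements merged into one kernel-verified Lean document; each statement's English description precedes it below -/
import Mathlib

section
/- Let M_G and M_H be n×m real matrices with all entries in {0,1} such that M_G ≡ M_H. For such a matrix M, define the fractional covering number k_f(M) as the infimum (in ℝ, with Lean's csInf conventions) of the set { t : ℝ | ∃ x : Fin m → ℝ, (∀ e, 0 ≤ x e) ∧ (∀ i, ∑ over e of M i e * x e ≥ 1) ∧ t = ∑ over e of x e }. Then k_f(M_G) = k_f(M_H). -/
/-! If `x` is a fractional cover of `M` and `S * M = N * T` with `S`, `T` doubly stochastic, then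
`T *ᵥ x` is a fractional cover of `N`: `N (T x) = S (M x)` averages entries that are at least `1`.
Its total weight is that of `x`, because the columns of `T` sum to `1`. The two matrix equations of
a fractional isomorphism give this transfer in both directions (the second one for the transposes),
so the two sets of cover weights coincide, and hence so do their infima. -/

open Matrix

/-- A real square matrix is doubly stochastic if all its entries are nonnegative and
each of its rows and each of its columns sums to 1. -/
def DoublyStochastic {n : Type*} [Fintype n] (S : Matrix n n ℝ) : Prop :=
  (∀ i j, 0 ≤ S i j) ∧ (∀ i, ∑ j, S i j = 1) ∧ (∀ j, ∑ i, S i j = 1)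

/-- Fractional isomorphism of hypergraphs given by their incidence matrices. -/
def FracIso {n m : Type*} [Fintype n] [Fintype m] (M N : Matrix n m ℝ) : Prop :=
  ∃ (S₁ : Matrix n n ℝ) (S₂ : Matrix m m ℝ),
    DoublyStochastic S₁ ∧ DoublyStochastic S₂ ∧
    S₁ * M = N * S₂ᵀ ∧ M * S₂ = S₁ᵀ * N

/-- The fractional covering number of a hypergraph given by its incidence matrix. -/
noncomputable def fracCoveringNumber {n m : ℕ} (M : Matrix (Fin n) (Fin m) ℝ) : ℝ :=
  sInf { t : ℝ | ∃ x : Fin m → ℝ, (∀ e, 0 ≤ x e) ∧ (∀ i, 1 ≤ ∑ e, M i e * x e) ∧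
    t = ∑ e, x e }

theorem DoublyStochastic.transpose' {n : Type*} [Fintype n] {S : Matrix n n ℝ}
    (h : DoublyStochastic S) : DoublyStochastic Sᵀ :=
  ⟨fun i j => h.1 j i, h.2.2, h.2.1⟩

/-- Covers transfer along one matrix equation, keeping their total weight. -/
theorem exists_cover_of_mul_eq {n m : ℕ} {M N : Matrix (Fin n) (Fin m) ℝ}
    {S : Matrix (Fin n) (Fin n) ℝ} {T : Matrix (Fin m) (Fin m) ℝ}
    (hS : DoublyStochastic S) (hT : DoublyStochastic T) (h : S * M = N * T)
    {x : Fin m → ℝ} (hx : ∀ e, 0 ≤ x e) (hc : ∀ i, 1 ≤ ∑ e, M i e * x e) :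
    ∃ y : Fin m → ℝ, (∀ e, 0 ≤ y e) ∧ (∀ i, 1 ≤ ∑ e, N i e * y e) ∧
      ∑ e, x e = ∑ e, y e := by
  refine ⟨T *ᵥ x, fun e => dotProduct_nonneg_of_nonneg (hT.1 e) hx,
    fun i => ?_, ?_⟩
  · have key : N *ᵥ (T *ᵥ x) = S *ᵥ (M *ᵥ x) := by
      rw [mulVec_mulVec, mulVec_mulVec, h]
    calc (1 : ℝ) = ∑ j, S i j * 1 := by simp [hS.2.1 i]
      _ ≤ ∑ j, S i j * (M *ᵥ x) j :=
        Finset.sum_le_sum fun j _ => mul_le_mul_of_nonneg_left (hc j) (hS.1 i j)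
      _ = ∑ e, N i e * (T *ᵥ x) e := (congrFun key i).symm
  · simp only [mulVec, dotProduct]
    rw [Finset.sum_comm]
    simp [← Finset.sum_mul, hT.2.2]

theorem fracIso_fracCoveringNumber_eq {n m : ℕ} (MG MH : Matrix (Fin n) (Fin m) ℝ)
    (hG01 : ∀ i e, MG i e = 0 ∨ MG i e = 1) (hH01 : ∀ i e, MH i e = 0 ∨ MH i e = 1)
    (h : FracIso MG MH) :
    fracCoveringNumber MG = fracCoveringNumber MH := by
  obtain ⟨S₁, S₂, h₁, h₂, hGH, hHG⟩ := h
  unfold fracCoveringNumber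
  congr 1
  ext t
  constructor
  · rintro ⟨x, hx, hc, rfl⟩
    exact exists_cover_of_mul_eq h₁ h₂.transpose' hGH hx hc
  · rintro ⟨x, hx, hc, rfl⟩
    exact exists_cover_of_mul_eq h₁.transpose' h₂ hHG.symm hx hc
end

section
/- Let V be a finite type and let G and H be simple graphs on V that are fractionally isomorphic, i.e., there exists a doubly stochastic matrix S indexed by V with A_G * S = S * A_H, where A_G, A_H are the real adjacency matrices. Define the fractional vertex cover number τ_f(G) as the infimum (in ℝ) of { t | ∃ x : V → ℝ, (∀ v, 0 ≤ x v) ∧ (∀ u v, G.Adj u v → x u + x v ≥ 1) ∧ t = ∑ over v of x v }, and the fractional independence number α_f(G) as the supremum of { t | ∃ y : V → ℝ, (∀ v, 0 ≤ y v) ∧ (∀ u v, G.Adj u v → y u + y v ≤ 1) ∧ t = ∑ over v of y v }. Then τ_f(G) = τ_f(H), and if moreover G has no isolated vertices, then α_f(G) = α_f(H). -/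
/-!
The support of `S` is a bipartite graph between two copies of `V`, the rows being the vertices
of `G` and the columns those of `H`. Its connected components colour both copies, and this common
colouring is equitable with the same parameters on both sides (`exists_common_equitable`): if `p`
and `q` are the indicators of one colour class in `G` and in `H`, then `S q = p` and `Sᵀ p = q`,
so the degree vectors `f = A_G p` and `g = A_H q` satisfy `f = S g` and `g = Sᵀ f`, which forces
`∑ S u w (f u - g w)² = 0` (`eq_of_mulVec_eq`).

Averaging a weight function of `H` over the colour classes transports it to `G` with the same total
weight. It also keeps the edge constraints, because the edges of `H` between two classes form a
biregular bipartite graph, so that the average over these edges of the endpoint sum is the sum of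
the two class averages (`exists_transfer`). Hence the sets of attained values for `G` and `H`
coincide, both for covers and for independent weightings; `Sᵀ` gives the reverse direction.
-/

open Matrix

/-- The fractional vertex cover number of a simple graph. -/
noncomputable def fracVertexCoverNumber {V : Type*} [Fintype V] (G : SimpleGraph V) : ℝ :=
  sInf { t : ℝ | ∃ x : V → ℝ, (∀ v, 0 ≤ x v) ∧ (∀ u v, G.Adj u v → 1 ≤ x u + x v) ∧
    t = ∑ v, x v }

/-- The fractional independence number of a simple graph. -/
noncomputable def fracIndependenceNumber {V : Type*} [Fintype V] (G : SimpleGraph V) : ℝ :=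
  sSup { t : ℝ | ∃ y : V → ℝ, (∀ v, 0 ≤ y v) ∧ (∀ u v, G.Adj u v → y u + y v ≤ 1) ∧
    t = ∑ v, y v }

/-- Functions exchanged by a doubly stochastic matrix and its transpose agree along the support. -/
theorem eq_of_mulVec_eq {V : Type*} [Fintype V] {S : Matrix V V ℝ} (hS : DoublyStochastic S)
    {f g : V → ℝ} (hf : ∀ u, f u = ∑ w, S u w * g w) (hg : ∀ w, g w = ∑ u, S u w * f u)
    {u w : V} (h : S u w ≠ 0) : f u = g w := by
  obtain ⟨h0, hr, hc⟩ := hS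
  have e1 : ∑ u, ∑ w, S u w * f u ^ 2 = ∑ u, f u ^ 2 := by
    simp_rw [← Finset.sum_mul, hr, one_mul]
  have e2 : ∑ u, ∑ w, S u w * g w ^ 2 = ∑ w, g w ^ 2 := by
    rw [Finset.sum_comm]
    simp_rw [← Finset.sum_mul, hc, one_mul]
  have e3 : ∑ u, ∑ w, S u w * (f u * g w) = ∑ u, f u ^ 2 := by
    refine Finset.sum_congr rfl fun u _ => ?_
    rw [sq]
    nth_rewrite 3 [hf u]
    rw [Finset.mul_sum]
    exact Finset.sum_congr rfl fun w _ => by ring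
  have e4 : ∑ u, ∑ w, S u w * (f u * g w) = ∑ w, g w ^ 2 := by
    rw [Finset.sum_comm]
    refine Finset.sum_congr rfl fun w _ => ?_
    rw [sq]
    nth_rewrite 3 [hg w]
    rw [Finset.mul_sum]
    exact Finset.sum_congr rfl fun u _ => by ring
  have key : ∑ u, ∑ w, S u w * (f u - g w) ^ 2 = 0 := by
    have : ∀ u w, S u w * (f u - g w) ^ 2
        = S u w * f u ^ 2 + S u w * g w ^ 2 - 2 * (S u w * (f u * g w)) := fun u w => by ring
    simp_rw [this, Finset.sum_sub_distrib, Finset.sum_add_distrib, ← Finset.mul_sum]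
    linarith
  have hn : ∀ u w, 0 ≤ S u w * (f u - g w) ^ 2 := fun u w => mul_nonneg (h0 u w) (sq_nonneg _)
  have k1 := (Finset.sum_eq_zero_iff_of_nonneg
    (fun u _ => Finset.sum_nonneg fun w _ => hn u w)).1 key u (Finset.mem_univ _)
  have k2 := (Finset.sum_eq_zero_iff_of_nonneg (fun w _ => hn u w)).1 k1 w (Finset.mem_univ _)
  have k3 := (mul_eq_zero.1 k2).resolve_left h
  exact sub_eq_zero.1 (pow_eq_zero_iff two_ne_zero |>.1 k3)

open Classical in
/-- A fractional isomorphism yields colourings of `G` and `H` that are constant along the support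
of `S` and equitable with common parameters: every vertex of colour `i`, in either graph, has
exactly `D i k` neighbours of colour `k`. -/
theorem exists_common_equitable.{u} {V : Type u} [Fintype V] (G H : SimpleGraph V)
    [DecidableRel G.Adj] [DecidableRel H.Adj] {S : Matrix V V ℝ} (hS : DoublyStochastic S)
    (hAdj : G.adjMatrix ℝ * S = S * H.adjMatrix ℝ)
    (hAdj' : H.adjMatrix ℝ * Sᵀ = Sᵀ * G.adjMatrix ℝ) :
    ∃ (K : Type u) (cG cH : V → K) (D : K → K → ℝ),
      (∀ u w, S u w ≠ 0 → cG u = cH w) ∧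
      (∀ u k, ∑ v, G.adjMatrix ℝ u v * (if cG v = k then 1 else 0) = D (cG u) k) ∧
      (∀ w k, ∑ z, H.adjMatrix ℝ w z * (if cH z = k then 1 else 0) = D (cH w) k) := by
  let r : V ⊕ V → V ⊕ V → Prop := fun a b => ∃ u w, a = .inl u ∧ b = .inr w ∧ S u w ≠ 0
  let cG : V → Quot r := fun u => Quot.mk r (.inl u)
  let cH : V → Quot r := fun w => Quot.mk r (.inr w)
  have hc : ∀ u w, S u w ≠ 0 → cG u = cH w := fun u w h => Quot.sound ⟨u, w, rfl, rfl, h⟩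
  let p : Quot r → V → ℝ := fun k v => if cG v = k then 1 else 0
  let q : Quot r → V → ℝ := fun k v => if cH v = k then 1 else 0
  have hpq : ∀ k u w, S u w * q k w = S u w * p k u := by
    intro k u w
    by_cases h : S u w = 0
    · simp [h]
    · simp only [p, q, hc u w h]
  have hSq : ∀ k, S *ᵥ q k = p k := by
    intro k
    ext u
    simp only [mulVec, dotProduct, hpq, ← Finset.sum_mul, hS.2.1, one_mul]
  have hSp : ∀ k, Sᵀ *ᵥ p k = q k := by
    intro k
    ext w
    simp only [mulVec, dotProduct, transpose_apply, ← hpq, ← Finset.sum_mul, hS.2.2, one_mul]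
  have hf : ∀ k, G.adjMatrix ℝ *ᵥ p k = S *ᵥ (H.adjMatrix ℝ *ᵥ q k) := by
    intro k
    rw [← hSq k, mulVec_mulVec, hAdj, ← mulVec_mulVec]
  have hg : ∀ k, H.adjMatrix ℝ *ᵥ q k = Sᵀ *ᵥ (G.adjMatrix ℝ *ᵥ p k) := by
    intro k
    rw [← hSp k, mulVec_mulVec, hAdj', ← mulVec_mulVec]
  refine ⟨Quot r, cG, cH, fun i k => Quot.lift
    (Sum.elim (G.adjMatrix ℝ *ᵥ p k) (H.adjMatrix ℝ *ᵥ q k)) ?_ i, hc, ?_, ?_⟩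
  · rintro _ _ ⟨u, w, rfl, rfl, h⟩
    exact eq_of_mulVec_eq hS (fun u => congrFun (hf k) u) (fun w => congrFun (hg k) w) h
  · intro u k
    rfl
  · intro w k
    rfl

open Classical in
/-- Transport of a weight function from `H` to `G` by averaging over colour classes. The sign `s`
covers both kinds of edge constraints: `s = 1` for covers, `s = -1` for independent weightings. -/
theorem exists_transfer {V : Type*} [Fintype V] (G H : SimpleGraph V)
    [DecidableRel G.Adj] [DecidableRel H.Adj] {S : Matrix V V ℝ} (hS : DoublyStochastic S)
    (hAdj : G.adjMatrix ℝ * S = S * H.adjMatrix ℝ)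
    (hAdj' : H.adjMatrix ℝ * Sᵀ = Sᵀ * G.adjMatrix ℝ) (s : ℝ) (x : V → ℝ)
    (hx : ∀ v, 0 ≤ x v) (hxe : ∀ u v, H.Adj u v → s ≤ s * (x u + x v)) :
    ∃ y : V → ℝ, (∀ v, 0 ≤ y v) ∧ (∀ u v, G.Adj u v → s ≤ s * (y u + y v)) ∧
      ∑ v, x v = ∑ v, y v := by
  obtain ⟨K, cG, cH, D, hc, hG, hH⟩ := exists_common_equitable G H hS hAdj hAdj'
  let q : K → V → ℝ := fun k v => if cH v = k then 1 else 0
  have q0 : ∀ k v, 0 ≤ q k v := fun k v => by simp only [q]; split_ifs <;> norm_num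
  let n : K → ℝ := fun k => ∑ w, q k w
  let X : K → ℝ := fun k => ∑ w, q k w * x w
  have hn : ∀ u, 0 < n (cG u) := by
    intro u
    obtain ⟨w, hw⟩ : ∃ w, S u w ≠ 0 := by
      by_contra! h
      have := hS.2.1 u
      simp [h] at this
    refine Finset.sum_pos' (fun w _ => q0 _ w) ⟨w, Finset.mem_univ _, ?_⟩
    simp [q, hc u w hw]
  have hcard : ∀ k, ∑ u, (if cG u = k then (1 : ℝ) else 0) = n k := by
    intro k
    have : ∀ u w, S u w * (if cG u = k then (1 : ℝ) else 0) = S u w * q k w := by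
      intro u w
      by_cases h : S u w = 0
      · simp [h]
      · simp only [q, hc u w h]
    calc _ = ∑ u, ∑ w, S u w * (if cG u = k then (1 : ℝ) else 0) := by
            simp_rw [← Finset.sum_mul, hS.2.1, one_mul]
      _ = ∑ u, ∑ w, S u w * q k w := by simp_rw [this]
      _ = n k := by
            rw [Finset.sum_comm]
            simp_rw [← Finset.sum_mul, hS.2.2, one_mul]
            rfl
  refine ⟨fun u => X (cG u) / n (cG u), ?_, ?_, ?_⟩
  · intro u
    exact div_nonneg (Finset.sum_nonneg fun w _ => mul_nonneg (q0 _ w) (hx w)) (hn u).le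
  · intro u v huv
    -- Summing `φ` at one end over all edges between classes `i` and `j` weights it by `D i j`.
    have hsum : ∀ (i j : K) (φ : V → ℝ), ∑ w, ∑ z, q i w * q j z * H.adjMatrix ℝ w z * φ w
        = D i j * ∑ w, q i w * φ w := by
      intro i j φ
      rw [Finset.mul_sum]
      refine Finset.sum_congr rfl fun w _ => ?_
      by_cases h : cH w = i
      · rw [← h, ← hH w j, Finset.sum_mul]
        exact Finset.sum_congr rfl fun z _ => by simp only [q]; ring
      · simp [q, h]
    have hsum' : ∀ (i j : K) (φ : V → ℝ), ∑ w, ∑ z, q i w * q j z * H.adjMatrix ℝ w z * φ z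
        = D j i * ∑ w, q j w * φ w := by
      intro i j φ
      rw [← hsum, Finset.sum_comm]
      refine Finset.sum_congr rfl fun w _ => Finset.sum_congr rfl fun z _ => ?_
      have : H.adjMatrix ℝ z w = H.adjMatrix ℝ w z := (H.isSymm_adjMatrix (α := ℝ)).apply w z
      rw [this]; ring
    obtain ⟨i, hi⟩ : ∃ i, cG u = i := ⟨_, rfl⟩
    obtain ⟨j, hj⟩ : ∃ j, cG v = j := ⟨_, rfl⟩
    have hni := hn u
    have hnj := hn v
    have hD : 0 < D i j := by
      rw [← hi, ← hG u j]
      refine Finset.sum_pos' (fun z _ => ?_) ⟨v, Finset.mem_univ _, ?_⟩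
      · rw [SimpleGraph.adjMatrix_apply]
        split_ifs <;> norm_num
      · simp [huv, hj]
    rw [hi] at hni
    rw [hj] at hnj
    -- Double counting of the edges between the two classes.
    have hedge : D i j * n i = D j i * n j := by
      have h1 := hsum i j (fun _ => 1)
      have h2 := hsum' i j (fun _ => 1)
      simp only [mul_one] at h1 h2
      exact h1.symm.trans h2
    have hpos : 0 ≤ ∑ w, ∑ z, q i w * q j z * H.adjMatrix ℝ w z * (s * (x w + x z) - s) := by
      refine Finset.sum_nonneg fun w _ => Finset.sum_nonneg fun z _ => ?_
      by_cases h : H.Adj w z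
      · rw [SimpleGraph.adjMatrix_apply, if_pos h, mul_one]
        exact mul_nonneg (mul_nonneg (q0 _ _) (q0 _ _)) (sub_nonneg.2 (hxe w z h))
      · simp [h]
    have hexp : ∑ w, ∑ z, q i w * q j z * H.adjMatrix ℝ w z * (s * (x w + x z) - s)
        = s * (D i j * X i) + s * (D j i * X j) - s * (D i j * n i) := by
      have h1 := hsum i j x
      have h2 := hsum' i j x
      have h3 := hsum i j (fun _ => 1)
      simp only [mul_one] at h3
      change _ = D i j * X i at h1
      change _ = D j i * X j at h2
      change _ = D i j * n i at h3
      rw [← h1, ← h2, ← h3]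
      simp_rw [Finset.mul_sum, ← Finset.sum_add_distrib, ← Finset.sum_sub_distrib]
      exact Finset.sum_congr rfl fun w _ => Finset.sum_congr rfl fun z _ => by ring
    have hXi : D i j * X i = (D i j * n i) * (X i / n i) := by field_simp
    have hXj : D j i * X j = (D i j * n i) * (X j / n j) := by rw [hedge]; field_simp
    rw [hexp, hXi, hXj] at hpos
    simp only [hi, hj]
    have he : 0 < D i j * n i := mul_pos hD hni
    refine sub_nonneg.1 (nonneg_of_mul_nonneg_right (a := D i j * n i) ?_ he)
    linarith
  · have hcol : ∀ w, ∃ u, cG u = cH w := by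
      intro w
      by_contra! h
      have h0 : ∀ u, S u w = 0 := fun u => by
        by_contra h'
        exact h u (hc u w h')
      have := hS.2.2 w
      simp [h0] at this
    simp only [X, Finset.sum_div]
    rw [Finset.sum_comm]
    refine Finset.sum_congr rfl fun w _ => ?_
    have : ∀ u, q (cG u) w * x w / n (cG u)
        = (if cG u = cH w then (1 : ℝ) else 0) * (x w / n (cH w)) := by
      intro u
      by_cases h : cG u = cH w
      · simp [q, h]
      · simp [q, h, Ne.symm h]
    simp_rw [this]
    rw [← Finset.sum_mul, hcard]
    obtain ⟨u, hu⟩ := hcol w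
    have := hn u
    rw [hu] at this
    field_simp

theorem fracIso_vertexCover_independence_eq {V : Type*} [Fintype V] [DecidableEq V]
    (G H : SimpleGraph V) [DecidableRel G.Adj] [DecidableRel H.Adj]
    (S : Matrix V V ℝ) (hS : DoublyStochastic S)
    (hAdj : G.adjMatrix ℝ * S = S * H.adjMatrix ℝ) :
    fracVertexCoverNumber G = fracVertexCoverNumber H ∧
    ((∀ v : V, ∃ u, G.Adj v u) →
      fracIndependenceNumber G = fracIndependenceNumber H) := by
  have hAdj' : H.adjMatrix ℝ * Sᵀ = Sᵀ * G.adjMatrix ℝ := by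
    have := congrArg transpose hAdj
    simpa [transpose_mul] using this.symm
  have hS' : DoublyStochastic Sᵀ := ⟨fun i j => hS.1 j i, hS.2.2, hS.2.1⟩
  have hGH := exists_transfer G H hS hAdj hAdj'
  have hHG := exists_transfer H G hS' hAdj' (by simpa using hAdj)
  refine ⟨?_, fun _ => ?_⟩
  · unfold fracVertexCoverNumber
    congr 1
    ext t
    constructor
    · rintro ⟨x, hx, hxe, rfl⟩
      obtain ⟨y, hy, hye, h⟩ := hHG 1 x hx (by simpa using hxe)
      exact ⟨y, hy, by simpa using hye, h⟩
    · rintro ⟨x, hx, hxe, rfl⟩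
      obtain ⟨y, hy, hye, h⟩ := hGH 1 x hx (by simpa using hxe)
      exact ⟨y, hy, by simpa using hye, h⟩
  · unfold fracIndependenceNumber
    congr 1
    ext t
    constructor
    · rintro ⟨x, hx, hxe, rfl⟩
      obtain ⟨y, hy, hye, h⟩ := hHG (-1) x hx (fun u v huv => by linarith [hxe u v huv])
      exact ⟨y, hy, fun u v huv => by linarith [hye u v huv], h⟩
    · rintro ⟨x, hx, hxe, rfl⟩
      obtain ⟨y, hy, hye, h⟩ := hGH (-1) x hx (fun u v huv => by linarith [hxe u v huv])
      exact ⟨y, hy, fun u v huv => by linarith [hye u v huv], h⟩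
end
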